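/- For every α ≥ 0 there exists a strategic game G such that G is β-selfish for every β > α, but G is not α-selfish (hence the selfishness level of G equals α yet the infimum defining it is not attained). -/

import Mathlib

open Finset
open scoped ENNReal

/-- A strategic game with `n` players: each player `i` has a nonempty strategy
set `S i` and a real-valued payoff function `p i` on joint strategies. -/
structure Game (n : ℕ) where
  S : Fin n → Type
  ne : ∀ i, Nonempty (S i)
  p : Fin n → ((j : Fin n) → S j) → ℝ

namespace Game

variable {n : ℕ}

/-- The social welfare of a joint strategy. -/
def SW (G : Game n) (s : (j : Fin n) → G.S j) : ℝ := ∑ i, G.p i s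

/-- A joint strategy is a social optimum if it maximizes the social welfare. -/
def SocialOptimum (G : Game n) (s : (j : Fin n) → G.S j) : Prop :=
  ∀ t, G.SW t ≤ G.SW s

/-- A joint strategy is a (pure) Nash equilibrium if no unilateral deviation is profitable. -/
def NashEq (G : Game n) (s : (j : Fin n) → G.S j) : Prop :=
  ∀ (i : Fin n) (s' : G.S i), G.p i (Function.update s i s') ≤ G.p i s

/-- The altruistic version `G(α)` of a game `G`. -/
def alt (G : Game n) (α : ℝ) : Game n where
  S := G.S
  ne := G.ne
  p := fun i s => G.p i s + α * G.SW s

/-- `G` is `α`-selfish if some pure Nash equilibrium of `G(α)` is a social optimum of `G`. -/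
def Selfish (G : Game n) (α : ℝ) : Prop :=
  ∃ s, (G.alt α).NashEq s ∧ G.SocialOptimum s

/-- The selfishness level of `G`: the infimum of the nonnegative `α` for which `G`
is `α`-selfish (`⊤` if there is no such `α`). -/
noncomputable def selfishnessLevel (G : Game n) : ℝ≥0∞ :=
  sInf {x : ℝ≥0∞ | ∃ α : ℝ, 0 ≤ α ∧ G.Selfish α ∧ x = ENNReal.ofReal α}

/-- A social optimum is stable if no player profits from a unilateral deviation
to another social optimum. -/
def StableOptimum (G : Game n) (s : (j : Fin n) → G.S j) : Prop :=
  G.SocialOptimum s ∧ ∀ (i : Fin n) (s' : G.S i),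
    G.SocialOptimum (Function.update s i s') →
      G.p i (Function.update s i s') ≤ G.p i s

/-- The appeal factor of a unilateral deviation `s'` of player `i` from `s`. -/
noncomputable def AF (G : Game n) (s : (j : Fin n) → G.S j) (i : Fin n) (s' : G.S i) : ℝ :=
  (G.p i (Function.update s i s') - G.p i s) /
    (G.SW s - G.SW (Function.update s i s'))

end Game


noncomputable def exPay (α : ℝ) (i : Fin 2) (s : Fin 2 → ℕ) : ℝ :=
  if s 0 = 0 then 0 else
    if i = 0 then α + 1 / ((s 1 : ℝ) + 1) else -1 - (α + 1 / ((s 1 : ℝ) + 1))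

noncomputable def exGame (α : ℝ) : Game 2 where
  S := fun _ => ℕ
  ne := fun _ => ⟨(0 : ℕ)⟩
  p := exPay α

theorem exPay_sum (α : ℝ) (s : Fin 2 → ℕ) :
    ∑ i, exPay α i s = if s 0 = 0 then 0 else -1 := by
  rw [Fin.sum_univ_two]
  by_cases h : s 0 = 0 <;> simp [exPay, h]

theorem exGame_iff (α β : ℝ) : (exGame α).Selfish β ↔
    ∃ s : Fin 2 → ℕ, (∀ (i : Fin 2) (s' : ℕ),
      exPay α i (Function.update s i s') + β * ∑ j, exPay α j (Function.update s i s')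
        ≤ exPay α i s + β * ∑ j, exPay α j s) ∧
      ∀ t : Fin 2 → ℕ, ∑ j, exPay α j t ≤ ∑ j, exPay α j s := Iff.rfl

theorem exGame_selfish (α β : ℝ) (h : α < β) : (exGame α).Selfish β := by
  obtain ⟨m, hm⟩ := exists_nat_one_div_lt (sub_pos.2 h)
  rw [exGame_iff]
  simp only [exPay_sum]
  refine ⟨![0, m], ?_, ?_⟩
  · intro i s'
    fin_cases i
    · by_cases h0 : s' = 0
      · simp [exPay, h0]
      · simp [exPay, h0] at hm ⊢
        linarith
    · simp [exPay]
  · intro t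
    simp only [Matrix.cons_val_zero, if_true]
    split_ifs <;> norm_num

theorem exGame_not (α β : ℝ) (h : β ≤ α) : ¬ (exGame α).Selfish β := by
  rw [exGame_iff]
  simp only [exPay_sum]
  rintro ⟨s, hN, hO⟩
  have h1 := hO (fun _ => 0)
  have h0 : s 0 = 0 := by
    by_contra hs
    simp [hs] at h1
    linarith
  have h2 := hN 0 1
  have h3 : 0 < 1 / ((s 1 : ℝ) + 1) := by positivity
  simp only [exPay, h0, Function.update_self, if_true, one_ne_zero, if_false,
    Function.update_of_ne (one_ne_zero : (1 : Fin 2) ≠ 0)] at h2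
  linarith

/-- for every `α ≥ 0` there is a strategic game that is `β`-selfish for every
`β > α` but not `α`-selfish; hence its selfishness level equals `α` but the infimum is not
attained. -/
theorem exists_game_with_unattained_selfishness_level (α : ℝ) (hα : 0 ≤ α) :
    ∃ (n : ℕ), 1 < n ∧ ∃ G : Game n,
      (∀ β : ℝ, α < β → G.Selfish β) ∧
      ¬ G.Selfish α ∧
      G.selfishnessLevel = ENNReal.ofReal α := by
  refine ⟨2, by norm_num, exGame α, exGame_selfish α, exGame_not α α le_rfl, ?_⟩
  apply le_antisymm
  · apply ENNReal.le_of_forall_pos_le_add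
    intro ε hε _
    have hε' : (0 : ℝ) < ε := hε
    refine sInf_le ⟨α + ε, by positivity, exGame_selfish α _ (by linarith), ?_⟩
    rw [ENNReal.ofReal_add hα hε'.le, ENNReal.ofReal_coe_nnreal]
  · apply le_sInf
    rintro x ⟨β, hβ, hs, rfl⟩
    apply ENNReal.ofReal_le_ofReal
    by_contra hc
    exact exGame_not α β (not_le.1 hc).le hs
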